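/- Let R be a commutative ring, M a pseudo-absorbing primary multiplication R-module, and N a submodule of M. Then M/N is a pseudo-absorbing primary multiplication R-module. -/

import Mathlib

/-- A proper ideal `I` is 2-absorbing primary if `a*b*c ∈ I` implies
`a*b ∈ I` or `a*c ∈ √I` or `b*c ∈ √I`. -/
def IsTwoAbsPrimary {R : Type*} [CommRing R] (I : Ideal R) : Prop :=
  I ≠ ⊤ ∧ ∀ a b c : R, a * b * c ∈ I → a * b ∈ I ∨ a * c ∈ I.radical ∨ b * c ∈ I.radical

/-- A proper submodule `N` of `M` is pseudo-absorbing primary if `(N :_R M)`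
is a 2-absorbing primary ideal of `R`. -/
def IsPseudoAbsPrimary {R M : Type*} [CommRing R] [AddCommGroup M] [Module R M]
    (N : Submodule R M) : Prop :=
  N ≠ ⊤ ∧ IsTwoAbsPrimary (N.colon ⊤)

/-- `M` is a pseudo-absorbing primary multiplication module if every
pseudo-absorbing primary submodule `N` satisfies `N = I • M` for some ideal `I`. -/
def IsPAPMultiplication (R M : Type*) [CommRing R] [AddCommGroup M] [Module R M] : Prop :=
  ∀ N : Submodule R M, IsPseudoAbsPrimary N → ∃ I : Ideal R, N = I • (⊤ : Submodule R M)

theorem colon_comap {R M M' : Type*} [Semiring R] [AddCommMonoid M] [Module R M]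
    [AddCommMonoid M'] [Module R M'] (f : M →ₗ[R] M') (K : Submodule R M') (S : Set M) :
    (K.comap f).colon S = K.colon (f '' S) := by
  ext r
  simp only [Submodule.mem_colon, Submodule.mem_comap, map_smul, Set.forall_mem_image]

section Surjective

variable {R M M' : Type*} [CommRing R] [AddCommGroup M] [Module R M]
  [AddCommGroup M'] [Module R M'] {f : M →ₗ[R] M'}

theorem isPseudoAbsPrimary_comap_iff_of_surjective (hf : Function.Surjective f)
    {K : Submodule R M'} : IsPseudoAbsPrimary (K.comap f) ↔ IsPseudoAbsPrimary K := by
  have comap_eq_top_iff : K.comap f = ⊤ ↔ K = ⊤ :=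
    (Submodule.comap_injective_of_surjective hf).eq_iff' (Submodule.comap_top f)
  have colon_eq : (K.comap f).colon ⊤ = K.colon ⊤ := by
    rw [colon_comap, Set.top_eq_univ, Set.image_univ_of_surjective hf, Set.top_eq_univ]
  rw [IsPseudoAbsPrimary, IsPseudoAbsPrimary, Ne, comap_eq_top_iff, colon_eq]

theorem IsPAPMultiplication.of_surjective (hM : IsPAPMultiplication R M)
    (hf : Function.Surjective f) : IsPAPMultiplication R M' := by
  intro K hK
  obtain ⟨I, hI⟩ := hM (K.comap f) ((isPseudoAbsPrimary_comap_iff_of_surjective hf).mpr hK)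
  refine ⟨I, ?_⟩
  calc
    K = (K.comap f).map f := (Submodule.map_comap_eq_of_surjective hf K).symm
    _ = (I • (⊤ : Submodule R M)).map f := by rw [hI]
    _ = I • (⊤ : Submodule R M).map f := Submodule.map_smul'' I ⊤ f
    _ = I • (⊤ : Submodule R M') := by
      rw [Submodule.map_top, LinearMap.range_eq_top.mpr hf]

end Surjective

/-- Quotients of pseudo-absorbing primary multiplication modules are
pseudo-absorbing primary multiplication. -/
theorem stmt_19 {R M : Type*} [CommRing R] [AddCommGroup M] [Module R M]
    (hM : IsPAPMultiplication R M) (N : Submodule R M) :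
    IsPAPMultiplication R (M ⧸ N) :=
  hM.of_surjective N.mkQ_surjective
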